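/- Let μ be a compactly supported Borel probability measure on ℝ and let (Q_n)_{n≥0}, (q_n)_{n≥0} be defined from μ as in the context. Then for all integers I, J ≥ 1, ∫ Q_I(λ)·Q_J(λ) dμ(λ) = Σ_{m=1}^{I} Σ_{n=1}^{J} (∫ Q_{I−m}(λ)·Q_{J−n}(λ) dμ(λ)) · q_{m+n}. -/

import Mathlib

open MeasureTheory

/-!
Writing `Q(z) = ∑ Qₙ zⁿ` and `q(z) = ∑ qₙ zⁿ`, the recursion reads `Q(z) = 1 / (q(z) - λ z)`, and
the choice of the `qₙ` amounts to `∫ Qₙ dμ = 0` for `n ≥ 1`: the `qₙ` are the free cumulants of `μ`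
and the `Qₙ` its free Appell polynomials. Expanding `∫ λ Q_I Q_J dμ` by the recursion once in `I`
and once in `J` shows that the difference of the two sides of the claim at `(I + 1, J)` agrees with
that at `(I, J + 1)`. Hence it depends on `I + J` only, and for `I = 0 < J` it vanishes.
-/

theorem sum_Icc_one_eq_sum_range {M : Type*} [AddCommMonoid M] (f : ℕ → M) (n : ℕ) :
    ∑ i ∈ Finset.Icc 1 n, f i = ∑ i ∈ Finset.range n, f (i + 1) := by
  rw [Finset.range_eq_Ico, Finset.sum_Ico_add' f 0 n 1]
  rfl

section HankelConvolution

variable {R : Type*} [NonUnitalNonAssocSemiring R]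

/-- The convolution of a two-index array `G` with the Hankel array `(m, n) ↦ c (m + n)`, shifted so
that the entry at `(I, J)` involves only the `G i j` with `i < I` and `j < J`. -/
def hankelConvolution (G : ℕ → ℕ → R) (c : ℕ → R) (I J : ℕ) : R :=
  ∑ m ∈ Finset.range I, ∑ n ∈ Finset.range J, G (I - (m + 1)) (J - (n + 1)) * c (m + n)

theorem hankelConvolution_succ_left (G : ℕ → ℕ → R) (c : ℕ → R) (I J : ℕ) :
    hankelConvolution G c (I + 1) J =
      hankelConvolution G (fun k => c (k + 1)) I J +
        ∑ n ∈ Finset.range J, G I (J - (n + 1)) * c n := by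
  simp only [hankelConvolution, Finset.sum_range_succ', Nat.add_sub_add_right, zero_add,
    Nat.sub_zero, add_right_comm]

theorem hankelConvolution_succ_right (G : ℕ → ℕ → R) (c : ℕ → R) (I J : ℕ) :
    hankelConvolution G c I (J + 1) =
      hankelConvolution G (fun k => c (k + 1)) I J +
        ∑ m ∈ Finset.range I, G (I - (m + 1)) J * c m := by
  simp only [hankelConvolution, Finset.sum_range_succ', Nat.add_sub_add_right, add_zero,
    Nat.sub_zero, Finset.sum_add_distrib, add_assoc]

theorem hankelConvolution_add_two_eq_sum_Icc (G : ℕ → ℕ → R) (c : ℕ → R) (I J : ℕ) :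
    hankelConvolution G (fun k => c (k + 2)) I J =
      ∑ m ∈ Finset.Icc 1 I, ∑ n ∈ Finset.Icc 1 J, G (I - m) (J - n) * c (m + n) := by
  simp only [hankelConvolution, sum_Icc_one_eq_sum_range]
  refine Finset.sum_congr rfl fun m _ => Finset.sum_congr rfl fun n _ => ?_
  rw [Nat.add_add_add_comm m 1 n 1]

end HankelConvolution

/-- `Q` is the sequence of free Appell polynomials, evaluated at `a`, of the distribution of `a`
under the functional `L`, and `κ` is the sequence of its free cumulants, indexed from `1`: the value
`κ 0` is left unconstrained. The normalization `L 1 = 1` is not part of the structure. -/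
structure IsFreeAppell {R A : Type*} [CommRing R] [CommRing A] [Algebra R A]
    (L : A →ₗ[R] R) (a : A) (Q : ℕ → A) (κ : ℕ → R) : Prop where
  zero : Q 0 = 1
  cumulant_succ (n : ℕ) : κ (n + 1) = L (a * Q n)
  succ (n : ℕ) : Q (n + 1) = a * Q n - ∑ i ∈ Finset.range (n + 1), κ (i + 1) • Q (n - i)

namespace IsFreeAppell

variable {R A : Type*} [CommRing R] [CommRing A] [Algebra R A]
  {L : A →ₗ[R] R} {a : A} {Q : ℕ → A} {κ : ℕ → R}

theorem map_succ_eq_zero (h : IsFreeAppell L a Q κ) (hL : L 1 = 1) (n : ℕ) :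
    L (Q (n + 1)) = 0 := by
  induction n using Nat.strong_induction_on with
  | _ n ih =>
    have lower_terms : ∑ i ∈ Finset.range n, κ (i + 1) * L (Q (n - i)) = 0 := by
      refine Finset.sum_eq_zero fun i hi => ?_
      obtain ⟨k, hk⟩ := Nat.exists_eq_add_of_lt (Finset.mem_range.mp hi)
      rw [show n - i = k + 1 by omega, ih k (by omega), mul_zero]
    calc
      L (Q (n + 1)) = κ (n + 1) - ∑ i ∈ Finset.range (n + 1), κ (i + 1) * L (Q (n - i)) := by
        simp only [h.succ, h.cumulant_succ n, map_sub, map_sum, map_smul, smul_eq_mul]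
      _ = 0 := by
        rw [Finset.sum_range_succ, lower_terms, Nat.sub_self, h.zero, hL, zero_add, mul_one,
          sub_self]

theorem map_succ_mul (h : IsFreeAppell L a Q κ) (n : ℕ) (b : A) :
    L (Q (n + 1) * b) =
      L (a * Q n * b) - κ 1 * L (Q n * b) -
        ∑ i ∈ Finset.range n, L (Q (n - (i + 1)) * b) * κ (i + 2) := by
  simp only [h.succ, Finset.sum_range_succ', sub_mul, add_mul, Finset.sum_mul, smul_mul_assoc,
    map_sub, map_add, map_sum, map_smul, smul_eq_mul, zero_add, Nat.sub_zero, mul_comm (L _)]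
  ring

theorem map_mul_sub_hankelConvolution_shift (h : IsFreeAppell L a Q κ) (I J : ℕ) :
    L (Q (I + 1) * Q J) -
        hankelConvolution (fun i j => L (Q i * Q j)) (fun k => κ (k + 2)) (I + 1) J =
      L (Q I * Q (J + 1)) -
        hankelConvolution (fun i j => L (Q i * Q j)) (fun k => κ (k + 2)) I (J + 1) := by
  have expand_left := h.map_succ_mul I (Q J)
  have expand_right :
      L (Q I * Q (J + 1)) =
        L (a * Q I * Q J) - κ 1 * L (Q I * Q J) -
          ∑ j ∈ Finset.range J, L (Q I * Q (J - (j + 1))) * κ (j + 2) := by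
    simpa only [mul_right_comm a (Q I), mul_comm (Q I)] using h.map_succ_mul J (Q I)
  rw [hankelConvolution_succ_left, hankelConvolution_succ_right]
  linear_combination expand_left - expand_right

theorem map_mul_eq_hankelConvolution (h : IsFreeAppell L a Q κ) (hL : L 1 = 1) (I J : ℕ)
    (hIJ : I + J ≠ 0) :
    L (Q I * Q J) = hankelConvolution (fun i j => L (Q i * Q j)) (fun k => κ (k + 2)) I J := by
  induction I generalizing J with
  | zero =>
    obtain ⟨k, rfl⟩ := Nat.exists_eq_succ_of_ne_zero (by omega : J ≠ 0)
    simp [hankelConvolution, h.zero, h.map_succ_eq_zero hL]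
  | succ I ih =>
    rw [← sub_eq_zero, h.map_mul_sub_hankelConvolution_shift, sub_eq_zero]
    exact ih (J + 1) (by omega)

end IsFreeAppell

theorem integrable_polynomial_eval {μ : Measure ℝ} (hμ : ∀ n : ℕ, Integrable (fun x => x ^ n) μ)
    (p : Polynomial ℝ) : Integrable (fun x => p.eval x) μ := by
  simp only [Polynomial.eval_eq_sum_range]
  exact integrable_finsetSum _ fun n _ => (hμ n).const_mul _

/-- The moment functional `p ↦ ∫ p dμ` on polynomials, for a measure `μ` with finite moments. -/
noncomputable def momentFunctional (μ : Measure ℝ) (hμ : ∀ n : ℕ, Integrable (fun x => x ^ n) μ) :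
    Polynomial ℝ →ₗ[ℝ] ℝ where
  toFun p := ∫ x, p.eval x ∂μ
  map_add' p r := by
    simp only [Polynomial.eval_add]
    exact integral_add (integrable_polynomial_eval hμ p) (integrable_polynomial_eval hμ r)
  map_smul' c p := by
    simp only [Polynomial.eval_smul, smul_eq_mul, integral_const_mul, RingHom.id_apply]

theorem momentFunctional_apply {μ : Measure ℝ} (hμ : ∀ n : ℕ, Integrable (fun x => x ^ n) μ)
    (p : Polynomial ℝ) : momentFunctional μ hμ p = ∫ x, p.eval x ∂μ :=
  rfl

theorem integrable_of_continuous_of_measure_compl_eq_zero {X E : Type*} [TopologicalSpace X]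
    [T2Space X] [MeasurableSpace X] [OpensMeasurableSpace X] [NormedAddCommGroup E]
    {μ : Measure X} [IsFiniteMeasureOnCompacts μ] {K : Set X} (hK : IsCompact K) (hKc : μ Kᶜ = 0)
    {f : X → E} (hf : Continuous f) : Integrable f μ := by
  rw [← Measure.restrict_eq_self_of_ae_mem (mem_ae_iff.mpr hKc)]
  exact hf.continuousOn.integrableOn_compact hK

theorem stmt11_general (μ : Measure ℝ) [IsProbabilityMeasure μ]
    (hμ : ∀ n : ℕ, Integrable (fun x => x ^ n) μ)
    (Q : ℕ → Polynomial ℝ) (q : ℕ → ℝ) (hQ0 : Q 0 = 1)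
    (hq : ∀ n : ℕ, 1 ≤ n → q n = ∫ x, x * (Q (n - 1)).eval x ∂μ)
    (hQrec : ∀ n : ℕ, 1 ≤ n →
      Q n = Polynomial.X * Q (n - 1) - ∑ i ∈ Finset.Icc 1 n, Polynomial.C (q i) * Q (n - i))
    (I J : ℕ) (hIJ : I + J ≠ 0) :
    (∫ x, (Q I).eval x * (Q J).eval x ∂μ) =
      ∑ m ∈ Finset.Icc 1 I, ∑ n ∈ Finset.Icc 1 J,
        (∫ x, (Q (I - m)).eval x * (Q (J - n)).eval x ∂μ) * q (m + n) := by
  have appell : IsFreeAppell (momentFunctional μ hμ) Polynomial.X Q q :=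
    { zero := hQ0
      cumulant_succ n := by simp [hq (n + 1) n.succ_pos, momentFunctional_apply]
      succ n := by
        simp [hQrec (n + 1) n.succ_pos, sum_Icc_one_eq_sum_range, Polynomial.smul_eq_C_mul] }
  have normalized : momentFunctional μ hμ 1 = 1 := by simp [momentFunctional_apply]
  simpa only [hankelConvolution_add_two_eq_sum_Icc, momentFunctional_apply,
    Polynomial.eval_mul] using appell.map_mul_eq_hankelConvolution normalized I J hIJ

theorem stmt11 (μ : Measure ℝ) [IsProbabilityMeasure μ]
    (K : Set ℝ) (hK : IsCompact K) (hKc : μ Kᶜ = 0)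
    (Q : ℕ → Polynomial ℝ) (q : ℕ → ℝ)
    (hQ0 : Q 0 = 1) (hq0 : q 0 = 1)
    (hq : ∀ n : ℕ, 1 ≤ n → q n = ∫ x, x * (Q (n - 1)).eval x ∂μ)
    (hQrec : ∀ n : ℕ, 1 ≤ n →
      Q n = Polynomial.X * Q (n - 1) - ∑ i ∈ Finset.Icc 1 n, Polynomial.C (q i) * Q (n - i)) :
    ∀ I J : ℕ, 1 ≤ I → 1 ≤ J →
      (∫ x, (Q I).eval x * (Q J).eval x ∂μ) =
        ∑ m ∈ Finset.Icc 1 I, ∑ n ∈ Finset.Icc 1 J,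
          (∫ x, (Q (I - m)).eval x * (Q (J - n)).eval x ∂μ) * q (m + n) := by
  intro I J hI _
  exact stmt11_general μ
    (fun n => integrable_of_continuous_of_measure_compl_eq_zero hK hKc (continuous_pow n))
    Q q hQ0 hq hQrec I J (by omega)
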